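/- (Bottom of the ascent for k = 2) In the Cholesky setting, (1/3)Tr(𝛉³) = ∂ Tr(θ₁θ₂). -/

import Mathlib

/-- An abstract model of the Dolbeault double complex of `(p,q)`-forms on a complex
manifold: a bigraded associative `ℂ`-algebra `Ω = ⨁ Ω^{p,q}`, graded-commutative with
respect to total degree, with `ℂ`-linear operators `∂` (`pd`) and `∂̄` (`pdb`) of
bidegrees `(1,0)` and `(0,1)`, squaring to zero and anticommuting, satisfying the
graded Leibniz rule. -/
structure DolbeaultAlgebra (Ω : Type*) [Ring Ω] [Algebra ℂ Ω] where
  /-- the `ℂ`-subspace of elements of bidegree `(p,q)` -/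
  deg : ℕ → ℕ → Submodule ℂ Ω
  one_mem : (1 : Ω) ∈ deg 0 0
  mul_mem : ∀ {p q p' q'} {a b : Ω}, a ∈ deg p q → b ∈ deg p' q' →
    a * b ∈ deg (p + p') (q + q')
  gcomm : ∀ {p q p' q'} (a b : Ω), a ∈ deg p q → b ∈ deg p' q' →
    a * b = ((-1 : ℂ) ^ ((p + q) * (p' + q'))) • (b * a)
  /-- the operator `∂` -/
  pd : Ω →ₗ[ℂ] Ω
  /-- the operator `∂̄` -/
  pdb : Ω →ₗ[ℂ] Ω
  pd_mem : ∀ {p q} {a : Ω}, a ∈ deg p q → pd a ∈ deg (p + 1) q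
  pdb_mem : ∀ {p q} {a : Ω}, a ∈ deg p q → pdb a ∈ deg p (q + 1)
  pd_pd : ∀ a : Ω, pd (pd a) = 0
  pdb_pdb : ∀ a : Ω, pdb (pdb a) = 0
  pd_pdb : ∀ a : Ω, pd (pdb a) + pdb (pd a) = 0
  pd_leibniz : ∀ {p q} (a b : Ω), a ∈ deg p q →
    pd (a * b) = pd a * b + ((-1 : ℂ) ^ (p + q)) • (a * pd b)
  pdb_leibniz : ∀ {p q} (a b : Ω), a ∈ deg p q →
    pdb (a * b) = pdb a * b + ((-1 : ℂ) ^ (p + q)) • (a * pdb b)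

namespace DolbeaultAlgebra

variable {Ω : Type*} [Ring Ω] [Algebra ℂ Ω] {r : ℕ}

/-- the entrywise extension of `∂` to `r × r` matrices over `Ω` -/
def mpd (A : DolbeaultAlgebra Ω) (M : Matrix (Fin r) (Fin r) Ω) :
    Matrix (Fin r) (Fin r) Ω := M.map A.pd

/-- the entrywise extension of `∂̄` to `r × r` matrices over `Ω` -/
def mpdb (A : DolbeaultAlgebra Ω) (M : Matrix (Fin r) (Fin r) Ω) :
    Matrix (Fin r) (Fin r) Ω := M.map A.pdb

/-- the assertion that all entries of a matrix lie in `Ω^{p,q}` -/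
def MatDeg (A : DolbeaultAlgebra Ω) (p q : ℕ) (M : Matrix (Fin r) (Fin r) Ω) : Prop :=
  ∀ i j, M i j ∈ A.deg p q

end DolbeaultAlgebra

variable {Ω : Type*} [Ring Ω] [Algebra ℂ Ω]

/-!
For `h = c * b` one has `h⁻¹∂h = b⁻¹(θ₁ + θ₂)b`, so by conjugation invariance and cyclicity of the
trace `Tr((h⁻¹∂h)³) = Tr(θ₁³) + Tr(θ₂³) + 3 Tr(θ₁²θ₂ + θ₁θ₂²)`. The structure equations
`∂θ₁ = θ₁²` and `∂θ₂ = -θ₂²` identify the mixed term with `3 ∂Tr(θ₁θ₂)`, which gives the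
Polyakov–Wiegmann identity. Since `b` and `c` are triangular, so are `θ₁` and `θ₂`; hence the
diagonal of `θᵢ³` consists of cubes of 1-forms, which vanish.
-/

section BlockTriangular

open Matrix

variable {m α R : Type*} [Fintype m] [LinearOrder α] {o : m → α} {M N : Matrix m m R}

theorem mul_apply_of_blockTriangular_left [NonUnitalNonAssocSemiring R] (ho : o.Injective)
    (hM : M.BlockTriangular o) {i j : m} (hN : ∀ k, o i < o k → N k j = 0) :
    (M * N) i j = M i i * N i j := by
  rw [mul_apply]
  refine Finset.sum_eq_single i (fun k _ hk => ?_) (by simp)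
  rcases lt_or_gt_of_ne (ho.ne hk) with hlt | hgt
  · rw [hM hlt, zero_mul]
  · rw [hN k hgt, mul_zero]

theorem pow_apply_self_of_blockTriangular [Semiring R] [DecidableEq m] (ho : o.Injective)
    (hM : M.BlockTriangular o) (n : ℕ) (i : m) : (M ^ n) i i = M i i ^ n := by
  induction n with
  | zero => simp
  | succ n ih =>
    rw [pow_succ, mul_apply_of_blockTriangular_left ho (hM.pow n) fun k hk => hM hk, ih, pow_succ]

/- Over a noncommutative ring a one-sided inverse of a triangular matrix need not be triangular;
commuting diagonal entries are enough to divide by `M i i`. -/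
theorem blockTriangular_of_mul_eq_one [Semiring R] [DecidableEq m] (ho : o.Injective)
    (hM : M.BlockTriangular o) (hMN : M * N = 1) (hcomm : ∀ i, Commute (M i i) (N i i)) :
    N.BlockTriangular o := by
  intro i
  induction i using (Finite.wellFounded_of_trans_of_irrefl (o ⁻¹'o (· > ·))).induction with
  | _ i ih =>
    have row (j : m) (hj : o j ≤ o i) : M i i * N i j = (1 : Matrix m m R) i j := by
      rw [← hMN, mul_apply_of_blockTriangular_left ho hM fun k hk => ih k hk (hj.trans_lt hk)]
    intro j hj
    have hdiag : N i i * M i i = 1 := by rw [← (hcomm i).eq, row i le_rfl, one_apply_eq]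
    have hoff : M i i * N i j = 0 := by rw [row j hj.le, one_apply_ne (ne_of_apply_ne o hj.ne')]
    rw [← one_mul (N i j), ← hdiag, mul_assoc, hoff, mul_zero]

end BlockTriangular

namespace DolbeaultAlgebra

open Matrix

variable {r p q p' q' : ℕ} {A : DolbeaultAlgebra Ω} {M N X Y Z : Matrix (Fin r) (Fin r) Ω}

theorem mul_self_eq_zero_of_odd {x : Ω} (hx : x ∈ A.deg p q) (hpq : Odd (p + q)) : x * x = 0 := by
  have hneg : x * x = -(x * x) := by simpa [(hpq.mul hpq).neg_one_pow] using A.gcomm x x hx hx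
  have : IsAddTorsionFree Ω := .of_isTorsionFree ℂ Ω
  exact self_eq_neg.mp hneg

theorem pd_one (A : DolbeaultAlgebra Ω) : A.pd 1 = 0 := by
  simpa using A.pd_leibniz 1 1 A.one_mem

theorem MatDeg.add (hM : A.MatDeg p q M) (hN : A.MatDeg p q N) : A.MatDeg p q (M + N) :=
  fun i j => add_mem (hM i j) (hN i j)

theorem MatDeg.mul (hM : A.MatDeg p q M) (hN : A.MatDeg p' q' N) :
    A.MatDeg (p + p') (q + q') (M * N) := by
  intro i j
  rw [mul_apply]
  exact sum_mem fun k _ => A.mul_mem (hM i k) (hN k j)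

theorem MatDeg.mpd (hM : A.MatDeg p q M) : A.MatDeg (p + 1) q (A.mpd M) :=
  fun i j => A.pd_mem (hM i j)

theorem mpd_one (A : DolbeaultAlgebra Ω) : A.mpd (1 : Matrix (Fin r) (Fin r) Ω) = 0 := by
  ext i j
  rcases eq_or_ne i j with rfl | hij
  · simp [mpd, pd_one]
  · simp [mpd, hij]

theorem mpd_mpd (A : DolbeaultAlgebra Ω) (M : Matrix (Fin r) (Fin r) Ω) :
    A.mpd (A.mpd M) = 0 := by
  ext i j
  exact A.pd_pd (M i j)

theorem mpd_mul (hM : A.MatDeg p q M) :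
    A.mpd (M * N) = A.mpd M * N + (-1 : ℂ) ^ (p + q) • (M * A.mpd N) := by
  ext i j
  simp only [mpd, map_apply, mul_apply, Matrix.add_apply, Matrix.smul_apply, map_sum,
    Finset.smul_sum, ← Finset.sum_add_distrib]
  exact Finset.sum_congr rfl fun k _ => A.pd_leibniz _ _ (hM i k)

theorem pd_trace (A : DolbeaultAlgebra Ω) (M : Matrix (Fin r) (Fin r) Ω) :
    A.pd (trace M) = trace (A.mpd M) :=
  map_sum A.pd _ _

theorem trace_mul_comm_of_matDeg (hM : A.MatDeg p q M) (hN : A.MatDeg p' q' N) :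
    trace (M * N) = (-1 : ℂ) ^ ((p + q) * (p' + q')) • trace (N * M) := by
  simp only [trace, diag_apply, mul_apply, Finset.smul_sum]
  rw [Finset.sum_comm]
  exact Finset.sum_congr rfl fun i _ => Finset.sum_congr rfl fun j _ =>
    A.gcomm _ _ (hM j i) (hN i j)

theorem trace_mul_cycle_of_matDeg (hX : A.MatDeg p q X) (hY : A.MatDeg p q Y)
    (hZ : A.MatDeg p q Z) : trace (X * Y * Z) = trace (Z * X * Y) := by
  have heven : Even ((p + p + (q + q)) * (p + q)) := ⟨(p + q) * (p + q), by ring⟩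
  rw [trace_mul_comm_of_matDeg (hX.mul hY) hZ, heven.neg_one_pow, one_smul, mul_assoc]

theorem trace_units_conj' (g : (Matrix (Fin r) (Fin r) Ω)ˣ) (hg : A.MatDeg 0 0 g.val)
    (hg' : A.MatDeg 0 0 g⁻¹.val) (hX : A.MatDeg p q X) :
    trace (g⁻¹.val * X * g.val) = trace X := by
  rw [mul_assoc, trace_mul_comm_of_matDeg hg' (hX.mul hg), mul_assoc, g.mul_inv]
  simp

theorem trace_add_pow_three (hX : A.MatDeg p q X) (hY : A.MatDeg p q Y) :
    trace ((X + Y) ^ 3) =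
      trace (X ^ 3) + trace (Y ^ 3) + (3 : ℂ) • trace (X * X * Y + X * Y * Y) := by
  have hXYX : trace (X * Y * X) = trace (X * X * Y) := trace_mul_cycle_of_matDeg hX hY hX
  have hYXX : trace (Y * X * X) = trace (X * X * Y) := (trace_mul_cycle_of_matDeg hX hX hY).symm
  have hYXY : trace (Y * X * Y) = trace (X * Y * Y) := (trace_mul_cycle_of_matDeg hX hY hY).symm
  have hYYX : trace (Y * Y * X) = trace (X * Y * Y) := trace_mul_cycle_of_matDeg hY hY hX
  have hthree (x : Ω) : (3 : ℂ) • x = x + x + x := by module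
  simp only [pow_three', add_mul, mul_add, trace_add, hthree, hXYX, hYXX, hYXY, hYYX]
  abel

theorem trace_pow_eq_zero_of_blockTriangular {α : Type*} [LinearOrder α] {o : Fin r → α}
    (ho : o.Injective) (hX : X.BlockTriangular o) (hdeg : A.MatDeg p q X) (hpq : Odd (p + q))
    {n : ℕ} (hn : 2 ≤ n) : trace (X ^ n) = 0 := by
  refine Finset.sum_eq_zero fun i _ => ?_
  rw [diag_apply, pow_apply_self_of_blockTriangular ho hX]
  exact pow_eq_zero_of_le hn <| by rw [sq, mul_self_eq_zero_of_odd (hdeg i i) hpq]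

section MaurerCartan

/-- The left Maurer–Cartan form `g⁻¹∂g`: the form `θ₂` of `c`, and `𝛉` of `h`. Invertible matrices
are encoded as units, so that `g⁻¹` is a genuine inverse over the noncommutative ring `Ω`. -/
def leftMaurerCartan (A : DolbeaultAlgebra Ω) (g : (Matrix (Fin r) (Fin r) Ω)ˣ) :
    Matrix (Fin r) (Fin r) Ω := g⁻¹.val * A.mpd g.val

/-- The right Maurer–Cartan form `(∂g)g⁻¹`: the form `θ₁` of `b`. -/
def rightMaurerCartan (A : DolbeaultAlgebra Ω) (g : (Matrix (Fin r) (Fin r) Ω)ˣ) :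
    Matrix (Fin r) (Fin r) Ω := A.mpd g.val * g⁻¹.val

variable {b c g : (Matrix (Fin r) (Fin r) Ω)ˣ}

theorem matDeg_leftMaurerCartan (hg : A.MatDeg 0 0 g.val) (hg' : A.MatDeg 0 0 g⁻¹.val) :
    A.MatDeg 1 0 (A.leftMaurerCartan g) := by
  simpa only [zero_add] using! hg'.mul hg.mpd

theorem matDeg_rightMaurerCartan (hg : A.MatDeg 0 0 g.val) (hg' : A.MatDeg 0 0 g⁻¹.val) :
    A.MatDeg 1 0 (A.rightMaurerCartan g) :=
  hg.mpd.mul hg'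

theorem mpd_units_inv (hg : A.MatDeg 0 0 g.val) :
    A.mpd g⁻¹.val = -(g⁻¹.val * A.mpd g.val * g⁻¹.val) := by
  have hleibniz : A.mpd g.val * g⁻¹.val + g.val * A.mpd g⁻¹.val = 0 := by
    simpa [mpd_one] using (mpd_mul (N := g⁻¹.val) hg).symm
  rw [mul_assoc, eq_neg_of_add_eq_zero_left hleibniz, mul_neg, neg_neg, g.inv_mul_cancel_left]

theorem mpd_leftMaurerCartan (hg : A.MatDeg 0 0 g.val) (hg' : A.MatDeg 0 0 g⁻¹.val) :
    A.mpd (A.leftMaurerCartan g) = -(A.leftMaurerCartan g * A.leftMaurerCartan g) := by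
  simp [leftMaurerCartan, mpd_mul hg', mpd_mpd, mpd_units_inv hg, mul_assoc]

theorem mpd_rightMaurerCartan (hg : A.MatDeg 0 0 g.val) :
    A.mpd (A.rightMaurerCartan g) = A.rightMaurerCartan g * A.rightMaurerCartan g := by
  simp [rightMaurerCartan, mpd_mul hg.mpd, mpd_mpd, mpd_units_inv hg, mul_assoc]

theorem leftMaurerCartan_mul (hc : A.MatDeg 0 0 c.val) :
    A.leftMaurerCartan (c * b) =
      b⁻¹.val * (A.rightMaurerCartan b + A.leftMaurerCartan c) * b.val := by
  simp [leftMaurerCartan, rightMaurerCartan, mpd_mul hc, mul_add, add_mul, mul_assoc, add_comm]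

theorem pd_trace_rightMaurerCartan_mul_leftMaurerCartan
    (hb : A.MatDeg 0 0 b.val) (hb' : A.MatDeg 0 0 b⁻¹.val)
    (hc : A.MatDeg 0 0 c.val) (hc' : A.MatDeg 0 0 c⁻¹.val) :
    A.pd (trace (A.rightMaurerCartan b * A.leftMaurerCartan c)) =
      trace (A.rightMaurerCartan b * A.rightMaurerCartan b * A.leftMaurerCartan c +
        A.rightMaurerCartan b * A.leftMaurerCartan c * A.leftMaurerCartan c) := by
  rw [pd_trace, mpd_mul (matDeg_rightMaurerCartan hb hb'), mpd_rightMaurerCartan hb,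
    mpd_leftMaurerCartan hc hc']
  simp [mul_assoc]

/-- The Polyakov–Wiegmann identity. -/
theorem trace_leftMaurerCartan_mul_pow_three
    (hb : A.MatDeg 0 0 b.val) (hb' : A.MatDeg 0 0 b⁻¹.val)
    (hc : A.MatDeg 0 0 c.val) (hc' : A.MatDeg 0 0 c⁻¹.val) :
    trace (A.leftMaurerCartan (c * b) ^ 3) =
      trace (A.rightMaurerCartan b ^ 3) + trace (A.leftMaurerCartan c ^ 3) +
        (3 : ℂ) • A.pd (trace (A.rightMaurerCartan b * A.leftMaurerCartan c)) := by
  have hθ₁ := matDeg_rightMaurerCartan hb hb'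
  have hθ₂ := matDeg_leftMaurerCartan hc hc'
  have hθ := hθ₁.add hθ₂
  have hcube := hθ.mul (hθ.mul hθ)
  rw [← pow_three] at hcube
  rw [leftMaurerCartan_mul hc, Units.conj_pow', trace_units_conj' b hb hb' hcube,
    trace_add_pow_three hθ₁ hθ₂,
    pd_trace_rightMaurerCartan_mul_leftMaurerCartan hb hb' hc hc']

section Triangular

variable {α : Type*} [LinearOrder α] {o : Fin r → α}

theorem blockTriangular_mpd (hM : M.BlockTriangular o) : (A.mpd M).BlockTriangular o :=
  hM.map A.pd

theorem blockTriangular_units_inv (ho : o.Injective) (hg : A.MatDeg 0 0 g.val)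
    (hg' : A.MatDeg 0 0 g⁻¹.val) (htri : g.val.BlockTriangular o) : g⁻¹.val.BlockTriangular o :=
  blockTriangular_of_mul_eq_one ho htri g.mul_inv fun i => by
    simpa [Commute, SemiconjBy] using A.gcomm _ _ (hg i i) (hg' i i)

theorem trace_leftMaurerCartan_pow_eq_zero (ho : o.Injective) (hg : A.MatDeg 0 0 g.val)
    (hg' : A.MatDeg 0 0 g⁻¹.val) (htri : g.val.BlockTriangular o) {n : ℕ} (hn : 2 ≤ n) :
    trace (A.leftMaurerCartan g ^ n) = 0 :=
  trace_pow_eq_zero_of_blockTriangular ho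
    ((blockTriangular_units_inv ho hg hg' htri).mul (blockTriangular_mpd htri))
    (matDeg_leftMaurerCartan hg hg') odd_one hn

theorem trace_rightMaurerCartan_pow_eq_zero (ho : o.Injective) (hg : A.MatDeg 0 0 g.val)
    (hg' : A.MatDeg 0 0 g⁻¹.val) (htri : g.val.BlockTriangular o) {n : ℕ} (hn : 2 ≤ n) :
    trace (A.rightMaurerCartan g ^ n) = 0 :=
  trace_pow_eq_zero_of_blockTriangular ho
    ((blockTriangular_mpd htri).mul (blockTriangular_units_inv ho hg hg' htri))
    (matDeg_rightMaurerCartan hg hg') odd_one hn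

end Triangular

end MaurerCartan

end DolbeaultAlgebra

open Matrix DolbeaultAlgebra in
theorem stmt13_general (A : DolbeaultAlgebra Ω) {r : ℕ} (b c : (Matrix (Fin r) (Fin r) Ω)ˣ)
    (hb : A.MatDeg 0 0 b.val) (hb' : A.MatDeg 0 0 b⁻¹.val)
    (hc : A.MatDeg 0 0 c.val) (hc' : A.MatDeg 0 0 c⁻¹.val)
    (hbu : b.val.IsUpperTriangular) (hcl : c.val.IsLowerTriangular) :
    (1 / 3 : ℂ) • trace (A.leftMaurerCartan (c * b) ^ 3) =
      A.pd (trace (A.rightMaurerCartan b * A.leftMaurerCartan c)) := by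
  have hθ₁ : trace (A.rightMaurerCartan b ^ 3) = 0 :=
    trace_rightMaurerCartan_pow_eq_zero Function.injective_id hb hb' hbu (by norm_num)
  have hθ₂ : trace (A.leftMaurerCartan c ^ 3) = 0 :=
    trace_leftMaurerCartan_pow_eq_zero OrderDual.toDual.injective hc hc' hcl (by norm_num)
  rw [trace_leftMaurerCartan_mul_pow_three hb hb' hc hc', hθ₁, hθ₂]
  module

/-- (Bottom of the ascent for `k = 2`) In the Cholesky setting,
`(1/3)Tr(Bθ³) = ∂Tr(θ₁θ₂)`. -/
theorem stmt13
    (A : DolbeaultAlgebra Ω) (r : ℕ) (hr : 1 ≤ r)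
    (b c binv cinv : Matrix (Fin r) (Fin r) Ω)
    (hbdeg : A.MatDeg 0 0 b) (hcdeg : A.MatDeg 0 0 c)
    (hbinvdeg : A.MatDeg 0 0 binv) (hcinvdeg : A.MatDeg 0 0 cinv)
    (hbu : ∀ i j : Fin r, j < i → b i j = 0) (hbd : ∀ i : Fin r, b i i = 1)
    (hcl : ∀ i j : Fin r, i < j → c i j = 0)
    (hbinvl : binv * b = 1) (hbinvr : b * binv = 1)
    (hcinvl : cinv * c = 1) (hcinvr : c * cinv = 1)
    (h hinv : Matrix (Fin r) (Fin r) Ω) (hh : h = c * b) (hhinv : hinv = binv * cinv)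
    (θ₁ θ₂ θ θb₁ θb₂ θb : Matrix (Fin r) (Fin r) Ω)
    (hθ₁ : θ₁ = A.mpd b * binv) (hθ₂ : θ₂ = cinv * A.mpd c) (hθ : θ = θ₁ + θ₂)
    (hθb₁ : θb₁ = A.mpdb b * binv) (hθb₂ : θb₂ = cinv * A.mpdb c) (hθb : θb = θb₁ + θb₂)
    (Bθ Bθb BΘ : Matrix (Fin r) (Fin r) Ω)
    (hBθ : Bθ = hinv * A.mpd h) (hBθb : Bθb = hinv * A.mpdb h) (hBΘ : BΘ = A.mpdb Bθ) :
    (1 / 3 : ℂ) • Matrix.trace (Bθ ^ 3) = A.pd (Matrix.trace (θ₁ * θ₂)) := by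
  subst hh hhinv hθ₁ hθ₂ hBθ
  exact stmt13_general A ⟨b, binv, hbinvr, hbinvl⟩ ⟨c, cinv, hcinvr, hcinvl⟩
    hbdeg hbinvdeg hcdeg hcinvdeg (fun i j => hbu i j) (fun i j => hcl i j)
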